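/- Let d ≥ 2, let Λ be a full-rank lattice in ℝ^d with det Λ = 1, and let P = {z ∈ ℝ^d : |z_i| ≤ λ_i, i = 1,…,d} for positive λ_i. If the pseudo-compound P* = {z : |z_i| ≤ (∏_j λ_j)/λ_i} contains a nonzero point of the dual lattice Λ*, then c·P contains a nonzero point of Λ, where c = d^{1/(2(d−1))}. -/

import Mathlib

/-!
Scaling the coordinates turns the box into the cube `C = [-1, 1]^d`, the lattice into `Aℤ^d`, and
the hypothesis into `|det A| ‖z‖ ≤ 1`, where `z` is the dual point, `‖·‖` is the Euclidean norm and
the vector `x` given by `zᵀA = xᵀ` is integral.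

Suppose first that `|det A| ‖z‖ < 1` and put `a = (det A) z`. For `U` uniform on `C`,
`E (a ⬝ U)² = ‖a‖² / 3 < 1 / 3`, so `P(|a ⬝ U| < σ) > σ` for some `σ > 0`: otherwise the layer cake
formula would give `E (a ⬝ U)² ≥ ∫₀¹ (1 - √t) dt = 1 / 3`. Now let `T` be the dilation along `x`
with determinant `σ / det A`. The slab `C ∩ {u | |a ⬝ u| < σ}` has volume more than
`2^d σ = 2^d det (AT)`, so by Minkowski's theorem it contains `ATy` for a nonzero integral `y`.
Since `a ⬝ ATy = σ (x ⬝ y)`, the integer `x ⬝ y` vanishes, whence `Ty = y` and `Ay` lies in `C`.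

The boundary case follows by applying this to `r⁻¹A` and `rz` with `r > 1`, which multiplies
`|det A| ‖z‖` by `r^(1 - d) < 1`, because only finitely many lattice points lie in `2C`.
Choosing `σ` by averaging replaces Vaaler's theorem on central sections of the cube.
-/

open MeasureTheory ProbabilityTheory Set Metric Matrix

section SmallBall

variable {Ω : Type*} [MeasurableSpace Ω] {μ : Measure Ω} [IsProbabilityMeasure μ] {X : Ω → ℝ}

lemma lintegral_Ioc_one_sub_sqrt :
    ∫⁻ t in Ioc (0 : ℝ) 1, ENNReal.ofReal (1 - √t) = ENNReal.ofReal (1 / 3) := by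
  have integral_eq : ∫ t in Ioc (0 : ℝ) 1, (1 - √t) = 1 / 3 := by
    rw [← intervalIntegral.integral_of_le zero_le_one, intervalIntegral.integral_sub
      (by simp) (Real.continuous_sqrt.intervalIntegrable _ _)]
    simp only [Real.sqrt_eq_rpow]
    rw [integral_rpow (Or.inl (by norm_num))]
    norm_num
  rw [← integral_eq, ofReal_integral_eq_lintegral_ofReal]
  · exact (continuous_const.sub Real.continuous_sqrt).integrableOn_Icc.mono_set Ioc_subset_Icc_self
  · filter_upwards [ae_restrict_mem measurableSet_Ioc] with t ht
    simpa using ht.2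

lemma one_third_le_lintegral_sq_of_measure_abs_lt_le (hX : AEMeasurable X μ)
    (h : ∀ s > 0, μ {ω | |X ω| < s} ≤ ENNReal.ofReal s) :
    ENNReal.ofReal (1 / 3) ≤ ∫⁻ ω, ENNReal.ofReal (X ω ^ 2) ∂μ := by
  have tail_bound (t : ℝ) (ht : 0 < t) : ENNReal.ofReal (1 - √t) ≤ μ {ω | t ≤ X ω ^ 2} := by
    have compl_eq : {ω | t ≤ X ω ^ 2} = {ω | |X ω| < √t}ᶜ := by
      ext ω
      simp [← Real.sqrt_sq_eq_abs, Real.sqrt_le_sqrt_iff (sq_nonneg _)]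
    rw [compl_eq, prob_compl_eq_one_sub₀ (nullMeasurableSet_lt hX.abs aemeasurable_const),
      ENNReal.ofReal_sub _ (Real.sqrt_nonneg t), ENNReal.ofReal_one]
    exact tsub_le_tsub_left (h _ (Real.sqrt_pos.mpr ht)) _
  calc ENNReal.ofReal (1 / 3)
      = ∫⁻ t in Ioc (0 : ℝ) 1, ENNReal.ofReal (1 - √t) := lintegral_Ioc_one_sub_sqrt.symm
    _ ≤ ∫⁻ t in Ioc (0 : ℝ) 1, μ {ω | t ≤ X ω ^ 2} :=
        setLIntegral_mono' measurableSet_Ioc fun t ht ↦ tail_bound t ht.1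
    _ ≤ ∫⁻ t in Ioi (0 : ℝ), μ {ω | t ≤ X ω ^ 2} := lintegral_mono_set Ioc_subset_Ioi_self
    _ = ∫⁻ ω, ENNReal.ofReal (X ω ^ 2) ∂μ :=
        (lintegral_eq_lintegral_meas_le μ (ae_of_all _ fun _ ↦ sq_nonneg _) (hX.pow_const 2)).symm

lemma exists_lt_measure_abs_lt_of_integral_sq_lt (hX : MemLp X 2 μ)
    (h : ∫ ω, X ω ^ 2 ∂μ < 1 / 3) :
    ∃ σ > 0, ENNReal.ofReal σ < μ {ω | |X ω| < σ} := by
  by_contra! hcon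
  have := one_third_le_lintegral_sq_of_measure_abs_lt_le hX.aemeasurable hcon
  rw [← ofReal_integral_eq_lintegral_ofReal hX.integrable_sq (ae_of_all _ fun _ ↦ sq_nonneg _),
    ENNReal.ofReal_le_ofReal_iff (integral_nonneg fun _ ↦ sq_nonneg _)] at this
  exact this.not_gt h

end SmallBall

section Cube

variable {ι : Type*} [Fintype ι]

lemma pi_cond {Ω : ι → Type*} [∀ i, MeasurableSpace (Ω i)] (μ : ∀ i, Measure (Ω i))
    [∀ i, SigmaFinite (μ i)] {s : ∀ i, Set (Ω i)} (hs : ∀ i, MeasurableSet (s i))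
    (h0 : ∀ i, μ i (s i) ≠ 0) :
    Measure.pi (fun i ↦ (μ i)[|s i]) = (Measure.pi μ)[|univ.pi s] := by
  refine Measure.pi_eq fun t _ ↦ ?_
  simp only [cond_apply (MeasurableSet.univ_pi hs), cond_apply (hs _), ← pi_inter_distrib,
    Measure.pi_pi, Finset.prod_mul_distrib]
  rw [ENNReal.prod_inv_distrib fun i _ _ _ _ ↦ Or.inl (h0 i)]

lemma memLp_dotProduct_pi {ν : ι → Measure ℝ} [∀ i, IsProbabilityMeasure (ν i)]
    (hν : ∀ i, MemLp id 2 (ν i)) (a : ι → ℝ) : MemLp (a ⬝ᵥ ·) 2 (Measure.pi ν) :=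
  memLp_finsetSum _ fun i _ ↦
    ((hν i).comp_measurePreserving (measurePreserving_eval ν i)).const_mul (a i)

lemma integral_dotProduct_sq_pi {ν : ι → Measure ℝ} [∀ i, IsProbabilityMeasure (ν i)]
    (hν : ∀ i, MemLp id 2 (ν i)) (hmean : ∀ i, ∫ t, t ∂ν i = 0) (a : ι → ℝ) :
    ∫ u, (a ⬝ᵥ u) ^ 2 ∂Measure.pi ν = ∑ i, a i ^ 2 * ∫ t, t ^ 2 ∂ν i := by
  have mean_zero : ∫ u, a ⬝ᵥ u ∂Measure.pi ν = 0 := by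
    have coord_integrable (i : ι) : Integrable (fun u ↦ a i * u i) (Measure.pi ν) :=
      (((hν i).comp_measurePreserving (measurePreserving_eval ν i)).integrable
        one_le_two).const_mul (a i)
    simp only [dotProduct]
    rw [integral_finsetSum _ fun i _ ↦ coord_integrable i]
    refine Finset.sum_eq_zero fun i _ ↦ ?_
    rw [integral_const_mul, integral_comp_eval (μ := ν) (i := i) (f := fun t ↦ t)
      (hν i).aestronglyMeasurable, hmean i, mul_zero]
  have variance_coord (i : ι) : Var[fun t ↦ a i * t; ν i] = a i ^ 2 * ∫ t, t ^ 2 ∂ν i := by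
    rw [variance_const_mul, variance_of_integral_eq_zero aemeasurable_id' (hmean i)]
  have variance_sum := variance_sum_pi (μ := ν) (X := fun i t ↦ a i * t)
    fun i ↦ (hν i).const_mul (a i)
  simp only [variance_coord] at variance_sum
  rw [← variance_sum, ← variance_of_integral_eq_zero
    (memLp_dotProduct_pi hν a).aemeasurable mean_zero]
  congr 1
  ext u
  simp [dotProduct]

instance isProbabilityMeasure_cond_closedBall :
    IsProbabilityMeasure (volume : Measure ℝ)[|closedBall 0 1] :=
  cond_isProbabilityMeasure_of_finite (by simp) (by simp)

lemma integral_cond_closedBall (f : ℝ → ℝ) :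
    ∫ t, f t ∂(volume : Measure ℝ)[|closedBall 0 1] = 1 / 2 * ∫ t in (-1)..1, f t := by
  rw [ProbabilityTheory.cond, integral_smul_measure, Real.volume_closedBall,
    Real.closedBall_eq_Icc, integral_Icc_eq_integral_Ioc,
    ← intervalIntegral.integral_of_le (by norm_num)]
  norm_num

lemma memLp_id_cond_closedBall : MemLp id 2 (volume : Measure ℝ)[|closedBall 0 1] := by
  refine MemLp.of_bound aestronglyMeasurable_id 1 ?_
  filter_upwards [ae_cond_mem measurableSet_closedBall] with t ht
  simpa using ht

lemma convex_setOf_abs_dotProduct_lt (a : ι → ℝ) (σ : ℝ) :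
    Convex ℝ {u : ι → ℝ | |a ⬝ᵥ u| < σ} := by
  have := (convex_ball (0 : ℝ) σ).linear_preimage (dotProductBilin ℝ ℝ a)
  rwa [ball_zero_eq] at this

lemma exists_lt_volume_closedBall_inter_slab (a : ι → ℝ) (ha : a ⬝ᵥ a < 1) :
    ∃ σ > 0, ENNReal.ofReal (2 ^ Fintype.card ι * σ) <
      volume (closedBall 0 1 ∩ {u : ι → ℝ | |a ⬝ᵥ u| < σ}) := by
  have cube_uniform : Measure.pi (fun _ : ι ↦ (volume : Measure ℝ)[|closedBall 0 1]) =
      volume[|closedBall (0 : ι → ℝ) 1] := by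
    rw [pi_cond _ (fun _ ↦ measurableSet_closedBall) (by simp), closedBall_pi _ zero_le_one]
    rfl
  have second_moment : ∫ u, (a ⬝ᵥ u) ^ 2 ∂volume[|closedBall (0 : ι → ℝ) 1] = (a ⬝ᵥ a) / 3 := by
    rw [← cube_uniform, integral_dotProduct_sq_pi (fun _ ↦ memLp_id_cond_closedBall)
      (fun _ ↦ by simp [integral_cond_closedBall]), ← Finset.sum_mul]
    simp only [integral_cond_closedBall, integral_pow, dotProduct, ← pow_two]
    norm_num [div_eq_mul_inv]
  have : IsProbabilityMeasure (volume[|closedBall (0 : ι → ℝ) 1]) := by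
    rw [← cube_uniform]
    infer_instance
  obtain ⟨σ, hσ, h⟩ := exists_lt_measure_abs_lt_of_integral_sq_lt (X := (a ⬝ᵥ ·))
    (cube_uniform ▸ memLp_dotProduct_pi (fun _ ↦ memLp_id_cond_closedBall) a)
    (by rw [second_moment]; linarith)
  refine ⟨σ, hσ, ?_⟩
  rw [cond_apply measurableSet_closedBall, Real.volume_pi_closedBall _ zero_le_one, mul_one,
    ← ENNReal.div_eq_inv_mul, ENNReal.lt_div_iff_mul_lt (by simp) (by simp),
    ← ENNReal.ofReal_mul hσ.le, mul_comm] at h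
  exact h

end Cube

section Minkowski

variable {ι : Type*} [Fintype ι]

lemma exists_int_ne_zero_mem_of_two_pow_lt_volume {S : Set (ι → ℝ)} (hconv : Convex ℝ S)
    (hsymm : ∀ u ∈ S, -u ∈ S) (hvol : 2 ^ Fintype.card ι < volume S) :
    ∃ y : ι → ℤ, y ≠ 0 ∧ (fun j ↦ (y j : ℝ)) ∈ S := by
  let b := Pi.basisFun ℝ ι
  have : Countable (Submodule.span ℤ (range b)).toAddSubgroup :=
    inferInstanceAs (Countable (Submodule.span ℤ (range b)))
  obtain ⟨⟨v, hv⟩, hne, hmem⟩ := exists_ne_zero_mem_lattice_of_measure_mul_two_pow_lt_measure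
    (ZSpan.isAddFundamentalDomain' b volume) hsymm hconv
    (by simpa [b, ZSpan.fundamentalDomain_pi_basisFun, Real.volume_pi_Ico] using hvol)
  choose y hy using (b.mem_span_iff_repr_mem ℤ v).mp hv
  obtain rfl : (fun j ↦ (y j : ℝ)) = v := by
    ext j
    simpa [b] using hy j
  refine ⟨y, ?_, hmem⟩
  rintro rfl
  exact hne (Subtype.ext (by ext; simp))

variable [DecidableEq ι] {A : Matrix ι ι ℝ}

lemma exists_int_ne_zero_mulVec_mem (hA : A.det ≠ 0) {S : Set (ι → ℝ)} (hconv : Convex ℝ S)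
    (hsymm : ∀ u ∈ S, -u ∈ S) (hvol : ENNReal.ofReal (2 ^ Fintype.card ι * |A.det|) < volume S) :
    ∃ y : ι → ℤ, y ≠ 0 ∧ A *ᵥ (fun j ↦ (y j : ℝ)) ∈ S := by
  refine exists_int_ne_zero_mem_of_two_pow_lt_volume (S := toLin' A ⁻¹' S)
    (hconv.linear_preimage _) (fun u hu ↦ by simpa [mulVec_neg] using hsymm _ hu) ?_
  rw [Measure.addHaar_preimage_linearMap volume (by rwa [LinearMap.det_toLin']),
    LinearMap.det_toLin', abs_inv, ENNReal.ofReal_inv_of_pos (abs_pos.mpr hA),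
    ← ENNReal.div_eq_inv_mul, ENNReal.lt_div_iff_mul_lt (by simp [hA]) (by simp)]
  simpa [ENNReal.ofReal_mul] using hvol

lemma finite_setOf_norm_mulVec_int_le (hA : A.det ≠ 0) (r : ℝ) :
    {y : ι → ℤ | ‖A *ᵥ (fun j ↦ (y j : ℝ))‖ ≤ r}.Finite := by
  have closed_embedding : Topology.IsClosedEmbedding fun y : ι → ℤ ↦ A *ᵥ (fun j ↦ (y j : ℝ)) :=
    ((toLin' A).isClosedEmbedding_of_injective
      (LinearMap.ker_eq_bot.mpr (mulVec_injective_of_det_ne_zero hA))).comp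
      (.piMap fun _ ↦ Int.isClosedEmbedding_coe_real)
  refine (closed_embedding.isCompact_preimage
    (isCompact_closedBall 0 r)).finite_of_discrete.subset fun y hy ↦ ?_
  simpa using hy

lemma exists_norm_mulVec_int_le_of_forall_gt (hA : A.det ≠ 0) {p : (ι → ℤ) → Prop} {r : ℝ}
    (h : ∀ s > r, ∃ y, p y ∧ ‖A *ᵥ (fun j ↦ (y j : ℝ))‖ ≤ s) :
    ∃ y, p y ∧ ‖A *ᵥ (fun j ↦ (y j : ℝ))‖ ≤ r := by
  obtain ⟨y₁, hy₁⟩ := h (r + 1) (lt_add_one r)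
  obtain ⟨y₀, ⟨hpy₀, hy₀⟩, hmin⟩ := exists_min_image
    {y | p y ∧ ‖A *ᵥ (fun j ↦ (y j : ℝ))‖ ≤ r + 1} (fun y ↦ ‖A *ᵥ (fun j ↦ (y j : ℝ))‖)
    ((finite_setOf_norm_mulVec_int_le hA (r + 1)).subset fun _ hy ↦ hy.2) ⟨y₁, hy₁⟩
  refine ⟨y₀, hpy₀, le_of_forall_gt_imp_ge_of_dense fun s hs ↦ ?_⟩
  obtain ⟨y, hpy, hy⟩ := h s hs
  rcases le_total s (r + 1) with hsr | hsr
  · exact (hmin y ⟨hpy, hy.trans hsr⟩).trans hy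
  · exact hy₀.trans hsr

end Minkowski

section DilationAlong

variable {K ι : Type*} [Field K] [Fintype ι] [DecidableEq ι]

/-- The matrix that multiplies `x` by `s` and fixes the orthogonal complement of `x`, used to
change the determinant of a lattice without moving its points orthogonal to `x`. If `x ⬝ᵥ x = 0`,
division by zero makes it the identity. -/
def dilationAlong (x : ι → K) (s : K) : Matrix ι ι K :=
  1 + vecMulVec x (((s - 1) / (x ⬝ᵥ x)) • x)

variable {x : ι → K}

lemma det_dilationAlong (hx : x ⬝ᵥ x ≠ 0) (s : K) : (dilationAlong x s).det = s := by
  rw [dilationAlong, vecMulVec_eq Unit, det_one_add_replicateCol_mul_replicateRow, smul_dotProduct,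
    smul_eq_mul, div_mul_cancel₀ _ hx, add_sub_cancel]

lemma vecMul_dilationAlong (hx : x ⬝ᵥ x ≠ 0) (s : K) : x ᵥ* dilationAlong x s = s • x := by
  rw [dilationAlong, vecMul_add, vecMul_one, vecMul_vecMulVec, smul_smul, mul_div_cancel₀ _ hx]
  module

lemma dilationAlong_mulVec_of_dotProduct_eq_zero {v : ι → K} (hv : x ⬝ᵥ v = 0) (s : K) :
    dilationAlong x s *ᵥ v = v := by
  rw [dilationAlong, add_mulVec, one_mulVec, vecMulVec_mulVec, smul_dotProduct, hv]
  simp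

end DilationAlong

section Transference

variable {ι : Type*} [Fintype ι]

lemma rpow_one_div_two_mul_sub_one_pow {n : ℕ} (hn : 2 ≤ n) :
    ((n : ℝ) ^ (1 / (2 * ((n : ℝ) - 1)))) ^ (2 * n) =
      n * ((n : ℝ) ^ (1 / (2 * ((n : ℝ) - 1)))) ^ 2 := by
  have hn0 : (0 : ℝ) < n := by positivity
  have hn1 : (n : ℝ) - 1 ≠ 0 := sub_ne_zero.mpr (by exact_mod_cast (by omega : n ≠ 1))
  simp only [← Real.rpow_natCast, ← Real.rpow_mul hn0.le]
  nth_rw 3 [← Real.rpow_one (n : ℝ)]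
  rw [← Real.rpow_add hn0]
  congr 1
  push_cast
  field_simp
  ring

lemma sq_mul_sum_sq_le_prod_sq {D c : ℝ} {lam z : ι → ℝ} (hD : D ≠ 0) (hlam : ∀ i, 0 < lam i)
    (hc : c ^ (2 * Fintype.card ι) = Fintype.card ι * c ^ 2)
    (hz : ∀ i, |z i| ≤ (∏ j, lam j) / (|D| * lam i)) :
    D ^ 2 * ∑ i, (c * lam i * z i) ^ 2 ≤ (∏ i, c * lam i) ^ 2 := by
  have coord_bound (i : ι) : D ^ 2 * (lam i * z i) ^ 2 ≤ (∏ j, lam j) ^ 2 := by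
    have := hz i
    rw [le_div_iff₀ (mul_pos (abs_pos.mpr hD) (hlam i))] at this
    rw [← mul_pow, sq_le_sq, abs_mul, abs_mul, abs_of_pos (hlam i),
      abs_of_pos (Finset.prod_pos fun i _ ↦ hlam i)]
    linarith
  calc D ^ 2 * ∑ i, (c * lam i * z i) ^ 2
      = c ^ 2 * ∑ i, D ^ 2 * (lam i * z i) ^ 2 := by
        simp only [Finset.mul_sum]
        exact Finset.sum_congr rfl fun i _ ↦ by ring
    _ ≤ c ^ 2 * ∑ _i : ι, (∏ j, lam j) ^ 2 := by gcongr with i; exact coord_bound i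
    _ = c ^ (2 * Fintype.card ι) * (∏ j, lam j) ^ 2 := by
        rw [hc]
        simp only [Finset.sum_const, Finset.card_univ, nsmul_eq_mul]
        ring
    _ = (∏ i, c * lam i) ^ 2 := by simp [Finset.prod_mul_distrib, mul_pow, ← pow_mul, mul_comm]

lemma intCast_dotProduct (x y : ι → ℤ) :
    (fun j ↦ (x j : ℝ)) ⬝ᵥ (fun j ↦ (y j : ℝ)) = ((x ⬝ᵥ y : ℤ) : ℝ) := by
  simp [dotProduct]

variable [DecidableEq ι] {A M : Matrix ι ι ℝ} {x : ι → ℤ} {z : ι → ℝ}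

lemma exists_int_orthogonal_norm_mulVec_le_one_of_lt (hA : A.det ≠ 0) (hx : x ≠ 0)
    (hzx : z ᵥ* A = fun j ↦ (x j : ℝ)) (h : A.det ^ 2 * (z ⬝ᵥ z) < 1) :
    ∃ y : ι → ℤ, (y ≠ 0 ∧ x ⬝ᵥ y = 0) ∧ ‖A *ᵥ (fun j ↦ (y j : ℝ))‖ ≤ 1 := by
  set xr : ι → ℝ := fun j ↦ (x j : ℝ)
  have hxr : xr ⬝ᵥ xr ≠ 0 := by
    rw [intCast_dotProduct, Int.cast_ne_zero]
    exact mt dotProduct_self_eq_zero.mp hx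
  obtain ⟨σ, hσ, hvol⟩ := exists_lt_volume_closedBall_inter_slab (A.det • z)
    (by rw [smul_dotProduct, dotProduct_smul, smul_eq_mul, smul_eq_mul]; linarith)
  let T := dilationAlong xr (σ / A.det)
  have det_AT : (A * T).det = σ := by
    rw [det_mul, det_dilationAlong hxr, mul_div_cancel₀ _ hA]
  obtain ⟨y, hy0, hy_ball, hy_slab⟩ := exists_int_ne_zero_mulVec_mem
    (det_AT.trans_ne hσ.ne')
    ((convex_closedBall 0 1).inter (convex_setOf_abs_dotProduct_lt (A.det • z) σ))
    (fun u hu ↦ by simpa using hu)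
    (by rwa [det_AT, abs_of_pos hσ])
  have slab_coord : (A.det • z) ⬝ᵥ (A * T) *ᵥ (fun j ↦ (y j : ℝ)) = σ * ((x ⬝ᵥ y : ℤ) : ℝ) := by
    rw [smul_dotProduct, dotProduct_mulVec, ← vecMul_vecMul, hzx, vecMul_dilationAlong hxr,
      smul_dotProduct, intCast_dotProduct, smul_smul, mul_div_cancel₀ _ hA, smul_eq_mul]
  have hxy : x ⬝ᵥ y = 0 := by
    rw [mem_ofPred_eq, slab_coord, abs_mul, abs_of_pos hσ, mul_lt_iff_lt_one_right hσ] at hy_slab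
    exact Int.abs_lt_one_iff.mp (by exact_mod_cast hy_slab)
  have hTy : T *ᵥ (fun j ↦ (y j : ℝ)) = fun j ↦ (y j : ℝ) :=
    dilationAlong_mulVec_of_dotProduct_eq_zero (by simp [xr, intCast_dotProduct, hxy]) _
  refine ⟨y, ⟨hy0, hxy⟩, ?_⟩
  rwa [mem_closedBall_zero_iff, ← mulVec_mulVec, hTy] at hy_ball

lemma exists_int_orthogonal_norm_mulVec_le_one [Nontrivial ι] (hA : A.det ≠ 0) (hx : x ≠ 0)
    (hzx : z ᵥ* A = fun j ↦ (x j : ℝ)) (h : A.det ^ 2 * (z ⬝ᵥ z) ≤ 1) :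
    ∃ y : ι → ℤ, (y ≠ 0 ∧ x ⬝ᵥ y = 0) ∧ ‖A *ᵥ (fun j ↦ (y j : ℝ))‖ ≤ 1 := by
  refine exists_norm_mulVec_int_le_of_forall_gt hA fun r hr ↦ ?_
  have hr0 : 0 < r := one_pos.trans hr
  have scaled_lt : (r⁻¹ • A).det ^ 2 * ((r • z) ⬝ᵥ (r • z)) < 1 := by
    obtain ⟨n, hn⟩ : ∃ n, Fintype.card ι = n + 2 :=
      ⟨_, (Nat.sub_add_cancel Fintype.one_lt_card).symm⟩
    calc (r⁻¹ • A).det ^ 2 * ((r • z) ⬝ᵥ (r • z))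
        = (A.det ^ 2 * (z ⬝ᵥ z)) * (r⁻¹ ^ (n + 1)) ^ 2 := by
          rw [det_smul, smul_dotProduct, dotProduct_smul, smul_eq_mul, smul_eq_mul, hn,
            pow_succ _ (n + 1)]
          field_simp
      _ ≤ (r⁻¹ ^ (n + 1)) ^ 2 := mul_le_of_le_one_left (by positivity) h
      _ < 1 := pow_lt_one₀ (by positivity)
          (pow_lt_one₀ (by positivity) (inv_lt_one_of_one_lt₀ hr) n.succ_ne_zero) two_ne_zero
  obtain ⟨y, hy, hy_norm⟩ := exists_int_orthogonal_norm_mulVec_le_one_of_lt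
    (A := r⁻¹ • A) (z := r • z) (by simp [hA, hr0.ne']) hx
    (by rw [smul_vecMul, vecMul_smul, smul_inv_smul₀ hr0.ne', hzx]) scaled_lt
  refine ⟨y, hy, ?_⟩
  rwa [smul_mulVec, norm_smul, norm_inv, Real.norm_of_nonneg hr0.le, inv_mul_le_iff₀ hr0,
    mul_one] at hy_norm

theorem exists_int_orthogonal_abs_mulVec_le [Nontrivial ι] (hM : M.det ≠ 0) (hx : x ≠ 0)
    (hzx : z ᵥ* M = fun j ↦ (x j : ℝ)) {b : ι → ℝ} (hb : ∀ i, 0 < b i)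
    (h : M.det ^ 2 * ∑ i, (b i * z i) ^ 2 ≤ (∏ i, b i) ^ 2) :
    ∃ y : ι → ℤ, (y ≠ 0 ∧ x ⬝ᵥ y = 0) ∧ ∀ i, |(M *ᵥ fun j ↦ (y j : ℝ)) i| ≤ b i := by
  have hprod : 0 < ∏ i, b i := Finset.prod_pos fun i _ ↦ hb i
  have det_scaled : (diagonal b⁻¹ * M).det = M.det / ∏ i, b i := by
    simp [det_mul, det_diagonal, div_eq_inv_mul]
  have vecMul_scaled : (b * z) ᵥ* (diagonal b⁻¹ * M) = fun j ↦ (x j : ℝ) := by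
    rw [← vecMul_vecMul, ← hzx]
    congr 1
    ext i
    simp [vecMul_diagonal, mul_comm (b i), (hb i).ne']
  obtain ⟨y, hy, hy_norm⟩ := exists_int_orthogonal_norm_mulVec_le_one
    (A := diagonal b⁻¹ * M) (by rw [det_scaled]; positivity) hx vecMul_scaled (by
      rw [det_scaled, div_pow, div_mul_eq_mul_div, div_le_one (by positivity)]
      simpa [dotProduct, ← pow_two] using h)
  refine ⟨y, hy, fun i ↦ ?_⟩
  have hi := (norm_le_pi_norm _ i).trans hy_norm
  rwa [← mulVec_mulVec, mulVec_diagonal, Pi.inv_apply, norm_mul, norm_inv,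
    Real.norm_of_nonneg (hb i).le, inv_mul_le_iff₀ (hb i), mul_one] at hi

theorem mahler_pseudo_compound_general [Nontrivial ι] (hM : M.det ≠ 0)
    {lam : ι → ℝ} (hlam : ∀ i, 0 < lam i)
    (hz : z = Mᵀ⁻¹ *ᵥ fun j ↦ (x j : ℝ)) (hz0 : z ≠ 0)
    (hzP : ∀ i, |z i| ≤ (∏ j, lam j) / (|M.det| * lam i)) :
    ∃ (w : ι → ℝ) (y : ι → ℤ), w = M *ᵥ (fun j ↦ (y j : ℝ)) ∧ w ≠ 0 ∧ z ⬝ᵥ w = 0 ∧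
      ∀ i, |w i| ≤
        (Fintype.card ι : ℝ) ^ (1 / (2 * ((Fintype.card ι : ℝ) - 1))) * lam i := by
  set c := (Fintype.card ι : ℝ) ^ (1 / (2 * ((Fintype.card ι : ℝ) - 1)))
  have hc : 0 < c := by positivity
  have hzx : z ᵥ* M = fun j ↦ (x j : ℝ) := by
    rw [← mulVec_transpose, hz, mulVec_mulVec, mul_nonsing_inv _ (by simp [hM]), one_mulVec]
  have hx : x ≠ 0 := by
    rintro rfl
    exact hz0 (by simp [hz, ← Pi.zero_def])
  obtain ⟨y, ⟨hy0, hxy⟩, hy⟩ := exists_int_orthogonal_abs_mulVec_le hM hx hzx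
    (fun i ↦ mul_pos hc (hlam i)) (sq_mul_sum_sq_le_prod_sq hM hlam
      (rpow_one_div_two_mul_sub_one_pow Fintype.one_lt_card) hzP)
  refine ⟨_, y, rfl, fun hw0 ↦ hy0 ?_, ?_, hy⟩
  · have := mulVec_injective_of_det_ne_zero hM (hw0.trans (mulVec_zero M).symm)
    ext j
    simpa using congrFun this j
  · rw [dotProduct_mulVec, hzx, intCast_dotProduct, hxy, Int.cast_zero]

end Transference

/-- Mahler's theorem in terms of pseudo-compound parallelepipeds: let `Λ = Mℤ^d`
be a unimodular lattice with dual `Λ* = (Mᵀ)⁻¹ℤ^d`, and let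
`P = {z : |z i| ≤ λ i}`. If the pseudo-compound `P* = {z : |z i| ≤ (∏ λ)/λ i}`
contains a nonzero point of `Λ*`, then `cP` contains a nonzero point of `Λ`,
where `c = d^{1/(2(d-1))}`. -/
theorem mahler_pseudo_compound (d : ℕ) (hd : 2 ≤ d)
    (lam : Fin d → ℝ) (hlam : ∀ i, 0 < lam i)
    (M : Matrix (Fin d) (Fin d) ℝ) (hM : M.det = 1)
    (z : Fin d → ℝ) (x : Fin d → ℤ)
    (hz : z = (M.transpose)⁻¹.mulVec (fun j => (x j : ℝ)))
    (hz0 : z ≠ 0)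
    (hzP : ∀ i, |z i| ≤ (∏ j, lam j) / lam i) :
    ∃ (w : Fin d → ℝ) (y : Fin d → ℤ),
      w = M.mulVec (fun j => (y j : ℝ)) ∧ w ≠ 0 ∧
      ∀ i, |w i| ≤ (d : ℝ) ^ (1 / (2 * ((d : ℝ) - 1))) * lam i := by
  have : Nontrivial (Fin d) := Fin.nontrivial_iff_two_le.mpr hd
  obtain ⟨w, y, hw, hw0, -, hle⟩ := mahler_pseudo_compound_general (M := M) (by simp [hM]) hlam
    hz hz0 (by simpa [hM] using hzP)
  exact ⟨w, y, hw, hw0, by simpa using hle⟩
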